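/- Let p > 2 and set σ := π^{2−p}/(p−1). Let ν be a probability measure on 𝕋 with a density (still denoted ν) with respect to λ that is a-Hölder with constant A, i.e. |ν(x)−ν(y)| ≤ A d(x,y)^a for all x,y, where a ∈ (0,1] and A > 0. Then there exists a constant C > 0, depending only on p and A, such that for every β ≥ 1 and every α ∈ (0, σ/(pβ²)) there exists a bounded measurable function h : 𝕋 → ℝ with ∫_𝕋 L_{α,β}φ dμ_β = ∫_𝕋 φ·h dμ_β for all φ ∈ C²(𝕋), and with ess sup_x |h(x)| ≤ C·max(αβ⁴, α^a β^{1+a}). -/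

import Mathlib

open MeasureTheory Real Set Filter

noncomputable section

instance : Fact (0 < 2 * π) := ⟨Real.two_pi_pos⟩

/-- The circle `𝕋 = ℝ/(2πℤ)`. -/
abbrev 𝕋 : Type := AddCircle (2 * π)

/-- The normalized Haar probability measure `λ` on the circle. -/
def lam : Measure 𝕋 := (ENNReal.ofReal (2 * π))⁻¹ • volume

/-- The representative of a point of the circle in `(-π, π]`. -/
def rep (z : 𝕋) : ℝ := ((AddCircle.equivIoc (2 * π) (-π) z : Set.Ioc (-π) (-π + 2 * π)) : ℝ)

/-- `σ(x,y) = +1` if the representative of `y - x` lies in `[0, π]`, `-1` otherwise. -/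
def sgn (x y : 𝕋) : ℝ := if 0 ≤ rep (y - x) then 1 else -1

/-- The potential `U_p(x) = ∫ d(x,y)^p ν(dy)`. -/
def Up (p : ℝ) (ν : Measure 𝕋) (x : 𝕋) : ℝ := ∫ y, dist x y ^ p ∂ν

/-- The normalizing constant `Z_β = ∫ exp(-β U_p) dλ`. -/
def Zp (p : ℝ) (ν : Measure 𝕋) (β : ℝ) : ℝ := ∫ x, Real.exp (-β * Up p ν x) ∂lam

/-- The Gibbs measure `μ_β` with density `exp(-β U_p)/Z_β` w.r.t. `λ`. -/
def gibbsp (p : ℝ) (ν : Measure 𝕋) (β : ℝ) : Measure 𝕋 :=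
  lam.withDensity fun x => ENNReal.ofReal (Real.exp (-β * Up p ν x) / Zp p ν β)

/-- The generator, acting on (the periodic lift) `φ` of a `C²` function on `𝕋`:
`L_{α,β}φ(x) = ½ φ''(x) + α⁻¹ ∫ [φ(x + (p/2)αβ d(x,y)^{p-1} σ(x,y)) - φ(x)] ν(dy)`. -/
def genp (p : ℝ) (ν : Measure 𝕋) (α β : ℝ) (φ : ℝ → ℝ) (z : 𝕋) : ℝ :=
  (1 / 2) * deriv (deriv φ) (rep z)
    + α⁻¹ * ∫ y, (φ (rep z + p / 2 * α * β * dist z y ^ (p - 1) * sgn z y) - φ (rep z)) ∂ν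

/-!
Lift everything to `2π`-periodic functions on `ℝ`. Integrating by parts in the diffusion part of the
generator and translating `x` in each jump gives the adjoint in `L²(exp (-β u) dx)` explicitly.
Applied to `1` it is `(β² u'² - β u'') / 2` plus the jump term
`α⁻¹ ∫ (G (x + r - δ r) exp (β (u x - u (x - δ r))) - G (x + r)) dr / 2π`, where the potential `u`
is the average of the density `G` against the kernel `W r = |r|^p` and `δ = αβW'/2`.

To first order in `δ`, the exponential contributes `α⁻¹ β u'` times the mean jump `-αβu'/2`, which
cancels `β² u'² / 2`; and moving the mass of `G` by `δ` contributes `α⁻¹` times the average of `G`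
against `δ' = αβW''/2` (up to boundary terms at `±π`, where `W'` jumps), which cancels
`-β u'' / 2`. With `δ` of order `αβ`, the remainder of the exponential is of order
`α⁻¹ (β δ)² ~ αβ⁴`. Since `G` is only Hölder it cannot be expanded; instead `G (r - δ r) - G r` is
expressed through the derivative of `∫ t in r..r - δ r, G t`, leaving a remainder of order
`α⁻¹ δ^(1 + a) ~ α^a β^(1 + a)`.
-/

section PowerKernel

variable {p q : ℝ}

lemma continuous_abs_rpow (hq : 0 ≤ q) : Continuous fun r : ℝ => |r| ^ q :=
  continuous_abs.rpow_const fun _ => Or.inr hq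

lemma hasDerivAt_mul_abs_rpow (hq : 0 ≤ q) (r : ℝ) :
    HasDerivAt (fun r : ℝ => r * |r| ^ q) ((q + 1) * |r| ^ q) r := by
  have := continuous_abs_rpow hq
  suffices hne : ∀ y ≠ 0, HasDerivAt (fun r : ℝ => r * |r| ^ q) ((q + 1) * |y| ^ q) y from
    hasDerivAt_of_hasDerivAt_of_ne' hne (by fun_prop) (by fun_prop) r
  intro y hy
  refine ((hasDerivAt_id y).mul ((hasDerivAt_abs hy).rpow_const (p := q)
    (Or.inl (abs_pos.2 hy).ne'))).congr_deriv ?_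
  have hpow : |y| ^ (q - 1) * |y| = |y| ^ q := by
    rw [rpow_sub_one (abs_pos.2 hy).ne', div_mul_cancel₀ _ (abs_pos.2 hy).ne']
  simp only [id_eq, one_mul]
  linear_combination q * hpow + q * |y| ^ (q - 1) * self_mul_sign y

lemma deriv_abs_rpow (hp : 1 < p) :
    deriv (fun r : ℝ => |r| ^ p) = fun r => p * (r * |r| ^ (p - 2)) := by
  funext r
  rw [(hasDerivAt_abs_rpow r hp).deriv]
  ring

lemma contDiff_two_abs_rpow (hp : 2 ≤ p) : ContDiff ℝ 2 fun r : ℝ => |r| ^ p := by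
  have hderiv₂ (r : ℝ) := (hasDerivAt_mul_abs_rpow (sub_nonneg.2 hp) r).const_mul p
  have hcont := continuous_abs_rpow (sub_nonneg.2 hp)
  refine (contDiff_succ_iff_deriv (n := 1)).2 ⟨fun r => ?_, by simp, ?_⟩
  · exact (hasDerivAt_abs_rpow r (by linarith)).differentiableAt
  rw [deriv_abs_rpow (by linarith), contDiff_one_iff_deriv]
  refine ⟨fun r => (hderiv₂ r).differentiableAt, ?_⟩
  rw [show deriv _ = _ from funext fun r => (hderiv₂ r).deriv]
  fun_prop

lemma mul_abs_rpow_sub_one_mul_sign (hp : 1 < p) (r : ℝ) :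
    p * (|r| ^ (p - 1) * if 0 ≤ r then 1 else -1) = deriv (fun r : ℝ => |r| ^ p) r := by
  have hpow : |r| ^ (p - 1) = |r| * |r| ^ (p - 2) := by
    rw [← rpow_one_add' (abs_nonneg r) (by linarith)]
    ring_nf
  have hsign : (|r| * if 0 ≤ r then 1 else -1) = r := by
    split_ifs with hr
    · rw [abs_of_nonneg hr, mul_one]
    · rw [abs_of_neg (not_le.1 hr), neg_mul_neg, mul_one]
  simp only [deriv_abs_rpow hp]
  linear_combination (p * if 0 ≤ r then 1 else -1) * hpow + p * |r| ^ (p - 2) * hsign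

end PowerKernel

section Derivatives

variable {f : ℝ → ℝ}

lemma periodic_deriv {c : ℝ} (hf : Function.Periodic f c) : Function.Periodic (deriv f) c :=
  fun x => by
    rw [← deriv_comp_add_const]
    exact congrArg (deriv · x) (funext hf)

lemma hasDerivAt_deriv (hf : ContDiff ℝ 1 f) (x : ℝ) : HasDerivAt f (deriv f x) x :=
  (hf.differentiable one_ne_zero x).hasDerivAt

lemma contDiff_one_deriv (hf : ContDiff ℝ 2 f) : ContDiff ℝ 1 (deriv f) := hf.deriv'

lemma continuous_deriv_deriv (hf : ContDiff ℝ 2 f) : Continuous (deriv (deriv f)) :=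
  hf.deriv'.continuous_deriv le_rfl

end Derivatives

/-- The average over a period of `w` against the translate of `G` by `x`: the convolution
`∫ w(y - x) G(y) λ(dy)`, where `y - x` is represented in `(-π, π]`, so that neither the kernel `w`
nor its derivatives need to be periodic. -/
def kernelAverage (w G : ℝ → ℝ) (x : ℝ) : ℝ := (2 * π)⁻¹ * ∫ r in (-π)..π, w r * G (x + r)

section KernelAverage

variable {v w G W : ℝ → ℝ} {B M : ℝ}

lemma neg_pi_le_pi : -π ≤ π := neg_le_self pi_pos.le

lemma kernelAverage_congr (h : ∀ r ∈ Ioc (-π) π, v r = w r) :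
    kernelAverage v G = kernelAverage w G := by
  funext x
  unfold kernelAverage
  congr 1
  refine intervalIntegral.integral_congr_ae (Eventually.of_forall fun r hr => ?_)
  rw [h r (uIoc_of_le neg_pi_le_pi ▸ hr)]

lemma continuous_kernelAverage (hw : Continuous w) (hG : Continuous G) :
    Continuous (kernelAverage w G) :=
  continuous_const.mul <| intervalIntegral.continuous_parametric_intervalIntegral_of_continuous'
    (f := fun x r => w r * G (x + r)) (by simp only [Function.uncurry_def]; fun_prop) _ _

lemma periodic_kernelAverage {c : ℝ} (hG : Function.Periodic G c) :
    Function.Periodic (kernelAverage w G) c := fun x => by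
  simp only [kernelAverage, add_right_comm x c, hG _]

lemma abs_intervalIntegral_le {a b : ℝ} (hab : a ≤ b) (h : ∀ r ∈ Icc a b, |w r| ≤ M) :
    |∫ r in a..b, w r| ≤ M * (b - a) := by
  rw [← abs_of_nonneg (sub_nonneg.2 hab)]
  exact intervalIntegral.norm_integral_le_of_norm_le_const (E := ℝ) fun r hr =>
    h r (Ioc_subset_Icc_self (uIoc_of_le hab ▸ hr))

lemma abs_kernelAverage_le (hw : ∀ r ∈ Icc (-π) π, |w r| ≤ M) (hG : ∀ x, |G x| ≤ B) (x : ℝ) :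
    |kernelAverage w G x| ≤ M * B := by
  have hM : 0 ≤ M := (abs_nonneg _).trans (hw π ⟨neg_pi_le_pi, le_rfl⟩)
  have hint : |∫ r in (-π)..π, w r * G (x + r)| ≤ M * B * (π - -π) :=
    abs_intervalIntegral_le neg_pi_le_pi fun r hr => by
      rw [abs_mul]
      exact mul_le_mul (hw r hr) (hG _) (abs_nonneg _) hM
  rw [kernelAverage, abs_mul, abs_of_pos (by positivity), inv_mul_le_iff₀ two_pi_pos]
  linarith

lemma hasDerivAt_intervalIntegral_right (hG : Continuous G) (a x : ℝ) :
    HasDerivAt (fun x => ∫ t in a..x, G t) (G x) x :=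
  intervalIntegral.integral_hasDerivAt_right (hG.intervalIntegrable _ _)
    hG.stronglyMeasurable.stronglyMeasurableAtFilter hG.continuousAt

lemma hasDerivAt_intervalIntegral_mul_translate (hw : Continuous w) (hG : Continuous G)
    (hB : ∀ x, |G x| ≤ B) {Γ : ℝ → ℝ} (hΓ : ∀ x, HasDerivAt Γ (G x) x) (a b x : ℝ) :
    HasDerivAt (fun x => ∫ r in a..b, w r * Γ (x + r)) (∫ r in a..b, w r * G (x + r)) x := by
  have hΓc : Continuous Γ := continuous_iff_continuousAt.2 fun y => (hΓ y).continuousAt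
  refine (intervalIntegral.hasDerivAt_integral_of_dominated_loc_of_deriv_le
    (F := fun x r => w r * Γ (x + r)) (F' := fun x r => w r * G (x + r))
    (bound := fun r => |w r| * B) (Metric.ball_mem_nhds x one_pos) ?_ ?_ ?_ ?_ ?_ ?_).2
  · exact Eventually.of_forall fun y => Continuous.aestronglyMeasurable (by fun_prop)
  · exact Continuous.intervalIntegrable (by fun_prop) _ _
  · exact Continuous.aestronglyMeasurable (by fun_prop)
  · refine Eventually.of_forall fun r _ y _ => ?_
    rw [norm_mul]
    exact mul_le_mul_of_nonneg_left (hB _) (abs_nonneg _)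
  · exact Continuous.intervalIntegrable (by fun_prop) _ _
  · exact Eventually.of_forall fun r _ y _ => ((hΓ (y + r)).comp_add_const y r).const_mul _

lemma exists_abs_le_of_periodic {c : ℝ} (hG : Continuous G) (hper : Function.Periodic G c)
    (hc : c ≠ 0) : ∃ B, ∀ x, |G x| ≤ B := by
  obtain ⟨B, hB⟩ := (hper.isBounded_of_continuous hc hG).exists_norm_le
  exact ⟨B, fun x => hB _ (mem_range_self x)⟩

-- `G` need not be differentiable: writing it as the derivative of its antiderivative moves the
-- derivative to `w`.
lemma hasDerivAt_kernelAverage (hw : ContDiff ℝ 1 w) (hG : Continuous G)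
    (hper : Function.Periodic G (2 * π)) (x : ℝ) :
    HasDerivAt (kernelAverage w G) ((2 * π)⁻¹ * (w π * G (x + π) - w (-π) * G (x + -π))
      - kernelAverage (deriv w) G x) x := by
  have hw' : Continuous (deriv w) := hw.continuous_deriv le_rfl
  obtain ⟨B, hB⟩ := exists_abs_le_of_periodic hG hper two_pi_pos.ne'
  have hΓ := hasDerivAt_intervalIntegral_right hG 0
  set Γ : ℝ → ℝ := fun y => ∫ t in (0 : ℝ)..y, G t
  have hparts : kernelAverage w G = fun x => (2 * π)⁻¹ *
      (w π * Γ (x + π) - w (-π) * Γ (x + -π) - ∫ r in (-π)..π, deriv w r * Γ (x + r)) := by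
    funext x
    exact congrArg _ <| intervalIntegral.integral_mul_deriv_eq_deriv_mul
      (fun r _ => hasDerivAt_deriv hw r) (fun r _ => (hΓ (x + r)).comp_const_add x r)
      (hw'.intervalIntegrable _ _) (Continuous.intervalIntegrable (by fun_prop) _ _)
  rw [hparts]
  refine (((((hΓ (x + π)).comp_add_const x π).const_mul _).sub
    (((hΓ (x + -π)).comp_add_const x (-π)).const_mul _)).sub
    (hasDerivAt_intervalIntegral_mul_translate hw' hG hB hΓ _ _ x)).const_mul _
    |>.congr_deriv ?_
  rw [kernelAverage]
  ring

lemma deriv_kernelAverage (hW : ContDiff ℝ 1 W) (hWπ : W (-π) = W π) (hG : Continuous G)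
    (hper : Function.Periodic G (2 * π)) :
    deriv (kernelAverage W G) = -kernelAverage (deriv W) G := by
  funext x
  rw [(hasDerivAt_kernelAverage hW hG hper x).deriv, hWπ, ← hper (x + -π), Pi.neg_apply]
  ring_nf

lemma deriv_deriv_kernelAverage (hW : ContDiff ℝ 2 W) (hWπ : W (-π) = W π) (hG : Continuous G)
    (hper : Function.Periodic G (2 * π)) (x : ℝ) :
    deriv (deriv (kernelAverage W G)) x = kernelAverage (deriv (deriv W)) G x
      - (2 * π)⁻¹ * (deriv W π * G (x + π) - deriv W (-π) * G (x + -π)) := by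
  rw [deriv_kernelAverage (hW.of_le one_le_two) hWπ hG hper,
    (hasDerivAt_kernelAverage (contDiff_one_deriv hW) hG hper x).neg.deriv]
  ring

lemma contDiff_two_kernelAverage (hW : ContDiff ℝ 2 W) (hWπ : W (-π) = W π) (hG : Continuous G)
    (hper : Function.Periodic G (2 * π)) : ContDiff ℝ 2 (kernelAverage W G) := by
  have hW₁ : ContDiff ℝ 1 W := hW.of_le one_le_two
  have hU₂ := continuous_kernelAverage (continuous_deriv_deriv hW) hG
  refine (contDiff_succ_iff_deriv (n := 1)).2
    ⟨fun x => (hasDerivAt_kernelAverage hW₁ hG hper x).differentiableAt, by simp,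
      contDiff_one_iff_deriv.2 ⟨?_, ?_⟩⟩
  · rw [deriv_kernelAverage hW₁ hWπ hG hper]
    exact fun x => (hasDerivAt_kernelAverage (contDiff_one_deriv hW) hG hper x).neg.differentiableAt
  · rw [funext (deriv_deriv_kernelAverage hW hWπ hG hper)]
    fun_prop

section Bounds

variable (hW : ContDiff ℝ 2 W) (hWπ : W (-π) = W π) (hG : Continuous G)
  (hper : Function.Periodic G (2 * π)) (hB : ∀ x, |G x| ≤ B)

include hW hWπ hG hper hB

lemma abs_deriv_kernelAverage_le (hM : ∀ r ∈ Icc (-π) π, |deriv W r| ≤ M) (x : ℝ) :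
    |deriv (kernelAverage W G) x| ≤ M * B := by
  rw [deriv_kernelAverage (hW.of_le one_le_two) hWπ hG hper, Pi.neg_apply, abs_neg]
  exact abs_kernelAverage_le hM hB x

lemma abs_deriv_deriv_kernelAverage_le (hM : ∀ r ∈ Icc (-π) π, |deriv W r| ≤ M)
    (hM' : ∀ r ∈ Icc (-π) π, |deriv (deriv W) r| ≤ M) (x : ℝ) :
    |deriv (deriv (kernelAverage W G)) x| ≤ 2 * (M * B) := by
  have hbdry (r) (hr : r ∈ Icc (-π) π) : |deriv W r * G (x + r)| ≤ M * B := by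
    rw [abs_mul]
    exact mul_le_mul (hM r hr) (hB _) (abs_nonneg _) ((abs_nonneg _).trans (hM r hr))
  have hπ := hbdry π ⟨neg_pi_le_pi, le_rfl⟩
  have hnegπ := hbdry (-π) ⟨le_rfl, neg_pi_le_pi⟩
  have hjump : |(2 * π)⁻¹ * (deriv W π * G (x + π) - deriv W (-π) * G (x + -π))| ≤ M * B := by
    rw [abs_mul, abs_of_pos (by positivity), inv_mul_le_iff₀ two_pi_pos]
    refine (abs_sub _ _).trans ((add_le_add hπ hnegπ).trans ?_)
    nlinarith [pi_gt_three, (abs_nonneg _).trans hπ]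
  rw [deriv_deriv_kernelAverage hW hWπ hG hper, two_mul (M * B)]
  exact (abs_sub _ _).trans (add_le_add (abs_kernelAverage_le hM' hB x) hjump)

end Bounds

end KernelAverage

section Displacement

variable {f m δ : ℝ → ℝ} {a b B N ε : ℝ}

lemma hasDerivAt_integral_displacement (hf : Continuous f) (hδ : ContDiff ℝ 1 δ) (r : ℝ) :
    HasDerivAt (fun r => ∫ t in r..r - δ r, f t) (f (r - δ r) * (1 - deriv δ r) - f r) r := by
  have hsplit : (fun r => ∫ t in r..r - δ r, f t) =
      fun r => (∫ t in (0 : ℝ)..r - δ r, f t) - ∫ t in (0 : ℝ)..r, f t := by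
    funext r
    rw [intervalIntegral.integral_interval_sub_left] <;> exact hf.intervalIntegrable _ _
  rw [hsplit]
  exact ((hasDerivAt_intervalIntegral_right hf 0 (r - δ r)).comp r
    ((hasDerivAt_id r).sub (hasDerivAt_deriv hδ r))).sub (hasDerivAt_intervalIntegral_right hf 0 r)

-- Multiplying by the derivative of `r ↦ r - δ r`, rather than substituting its inverse, avoids
-- having to assume that the displacement is injective.
lemma integral_mul_displacement_sub_eq (hf : Continuous f) (hm : ContDiff ℝ 1 m)
    (hδ : ContDiff ℝ 1 δ) :
    ∫ r in a..b, m r * (f (r - δ r) - f r) =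
      (m b * (∫ t in b..b - δ b, f t) - m a * (∫ t in a..a - δ a, f t)
        - ∫ r in a..b, deriv m r * ∫ t in r..r - δ r, f t)
      + ∫ r in a..b, m r * (deriv δ r * f (r - δ r)) := by
  have hmc := hm.continuous
  have hδc := hδ.continuous
  have := hδ.continuous_deriv le_rfl
  rw [← intervalIntegral.integral_mul_deriv_eq_deriv_mul (fun r _ => hasDerivAt_deriv hm r)
    (fun r _ => hasDerivAt_integral_displacement hf hδ r)
    ((hm.continuous_deriv le_rfl).intervalIntegrable _ _)
    (Continuous.intervalIntegrable (by fun_prop) _ _), ← intervalIntegral.integral_add]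
  · congr 1 with r
    ring
  all_goals exact Continuous.intervalIntegrable (by fun_prop) _ _

lemma abs_integral_displacement_le (hB : ∀ t, |f t| ≤ B) {r : ℝ} (hδ : |δ r| ≤ ε) :
    |∫ t in r..r - δ r, f t| ≤ B * ε := by
  have h := intervalIntegral.norm_integral_le_of_norm_le_const (f := f) (a := r) (b := r - δ r)
    fun t _ => hB t
  rw [sub_sub_cancel_left, abs_neg] at h
  exact h.trans (mul_le_mul_of_nonneg_left hδ ((abs_nonneg _).trans (hB 0)))

lemma abs_integral_mul_displacement_sub_le (hf : Continuous f) (hm : ContDiff ℝ 1 m)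
    (hδ : ContDiff ℝ 1 δ) (hab : a ≤ b) (hB : ∀ t, |f t| ≤ B)
    (hN : ∀ r ∈ Icc a b, |m r| ≤ N) (hN' : ∀ r ∈ Icc a b, |deriv m r| ≤ N)
    (hε : ∀ r ∈ Icc a b, |δ r| ≤ ε) (hε' : ∀ r ∈ Icc a b, |deriv δ r| ≤ ε) :
    |∫ r in a..b, m r * (f (r - δ r) - f r)| ≤ 2 * (1 + (b - a)) * (N * (B * ε)) := by
  have ha : a ∈ Icc a b := left_mem_Icc.2 hab
  have hb : b ∈ Icc a b := right_mem_Icc.2 hab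
  have hN0 : 0 ≤ N := (abs_nonneg _).trans (hN a ha)
  have hD (r) (hr : r ∈ Icc a b) : |∫ t in r..r - δ r, f t| ≤ B * ε :=
    abs_integral_displacement_le hB (hε r hr)
  have hbdry (r) (hr : r ∈ Icc a b) : |m r * ∫ t in r..r - δ r, f t| ≤ N * (B * ε) := by
    rw [abs_mul]
    exact mul_le_mul (hN r hr) (hD r hr) (abs_nonneg _) hN0
  have hint₁ : |∫ r in a..b, deriv m r * ∫ t in r..r - δ r, f t| ≤ N * (B * ε) * (b - a) :=
    abs_intervalIntegral_le hab fun r hr => by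
      rw [abs_mul]
      exact mul_le_mul (hN' r hr) (hD r hr) (abs_nonneg _) hN0
  have hint₂ : |∫ r in a..b, m r * (deriv δ r * f (r - δ r))| ≤ N * (B * ε) * (b - a) :=
    abs_intervalIntegral_le hab fun r hr => by
      rw [abs_mul, abs_mul, mul_comm |deriv δ r|]
      have hB0 : 0 ≤ B := (abs_nonneg _).trans (hB 0)
      exact mul_le_mul (hN r hr) (mul_le_mul (hB _) (hε' r hr) (abs_nonneg _) hB0)
        (by positivity) hN0
  rw [integral_mul_displacement_sub_eq hf hm hδ]
  have ha' := hbdry a ha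
  have hb' := hbdry b hb
  rw [abs_le] at *
  constructor <;> linarith

section Holder

variable {A θ : ℝ}

lemma abs_integral_displacement_add_le (hf : Continuous f)
    (hH : ∀ t t', |f t - f t'| ≤ A * |t - t'| ^ θ) (hA : 0 ≤ A) (hθ : 0 ≤ θ) {r : ℝ}
    (hδ : |δ r| ≤ ε) :
    |(∫ t in r..r - δ r, f t) + δ r * f r| ≤ A * ε ^ θ * ε := by
  have hconst : (∫ t in r..r - δ r, f t) + δ r * f r = ∫ t in r..r - δ r, (f t - f r) := by
    rw [intervalIntegral.integral_sub (hf.intervalIntegrable _ _) (by simp),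
      intervalIntegral.integral_const, smul_eq_mul]
    ring
  have h : |∫ t in r..r - δ r, (f t - f r)| ≤ A * |δ r| ^ θ * |r - δ r - r| := by
    refine intervalIntegral.norm_integral_le_of_norm_le_const (E := ℝ) fun t ht => (hH t r).trans ?_
    gcongr A * ?_ ^ θ
    simpa using abs_sub_left_of_mem_uIcc (uIoc_subset_uIcc ht)
  rw [sub_sub_cancel_left, abs_neg] at h
  have hε : 0 ≤ ε := (abs_nonneg _).trans hδ
  exact hconst ▸ h.trans (by gcongr)

-- The terms of first order in `δ` are exact; the Hölder modulus is only paid at distance `ε`.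
lemma abs_integral_displacement_sub_sub_le (hf : Continuous f) (hδ : ContDiff ℝ 1 δ)
    (hab : a ≤ b) (hH : ∀ t t', |f t - f t'| ≤ A * |t - t'| ^ θ) (hA : 0 ≤ A) (hθ : 0 ≤ θ)
    (hε : ∀ r ∈ Icc a b, |δ r| ≤ ε) (hε' : ∀ r ∈ Icc a b, |deriv δ r| ≤ ε) :
    |(∫ r in a..b, (f (r - δ r) - f r))
        - ((∫ r in a..b, deriv δ r * f r) - (δ b * f b - δ a * f a))|
      ≤ (2 + (b - a)) * (A * ε ^ θ * ε) := by
  have hδc := hδ.continuous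
  have := hδ.continuous_deriv le_rfl
  have ha := abs_integral_displacement_add_le hf hH hA hθ (hε a (left_mem_Icc.2 hab))
  have hb := abs_integral_displacement_add_le hf hH hA hθ (hε b (right_mem_Icc.2 hab))
  have hint : |∫ r in a..b, deriv δ r * (f (r - δ r) - f r)| ≤ A * ε ^ θ * ε * (b - a) :=
    abs_intervalIntegral_le hab fun r hr => by
      rw [abs_mul, mul_comm]
      refine mul_le_mul ((hH _ _).trans ?_) (hε' r hr) (abs_nonneg _)
        (mul_nonneg hA (rpow_nonneg ((abs_nonneg _).trans (hε r hr)) _))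
      rw [sub_sub_cancel_left, abs_neg]
      gcongr
      exact hε r hr
  have hsplit : ∫ r in a..b, deriv δ r * (f (r - δ r) - f r) =
      (∫ r in a..b, deriv δ r * f (r - δ r)) - ∫ r in a..b, deriv δ r * f r := by
    rw [← intervalIntegral.integral_sub (Continuous.intervalIntegrable (by fun_prop) _ _)
      (Continuous.intervalIntegrable (by fun_prop) _ _)]
    simp only [mul_sub]
  have hparts := integral_mul_displacement_sub_eq (a := a) (b := b) hf
    (contDiff_const (c := (1 : ℝ))) hδ
  simp only [deriv_const', one_mul, zero_mul, intervalIntegral.integral_zero] at hparts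
  rw [hparts]
  rw [hsplit] at hint
  rw [abs_le] at *
  constructor <;> linarith

end Holder

end Displacement

section Exponential

lemma abs_exp_sub_one_sub_le (t : ℝ) : |exp t - 1 - t| ≤ t ^ 2 * exp |t| := by
  have h := Complex.norm_exp_sub_sum_le_norm_mul_exp (t : ℂ) 2
  simp only [Finset.sum_range_succ, Finset.sum_range_zero, pow_zero, Nat.factorial_zero,
    Nat.cast_one, div_one, zero_add, pow_one, Nat.factorial_one, Complex.norm_real, norm_eq_abs,
    sq_abs] at h
  rwa [← sub_sub, ← Complex.ofReal_exp, ← Complex.ofReal_one, ← Complex.ofReal_sub,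
    ← Complex.ofReal_sub, Complex.norm_real, norm_eq_abs] at h

variable {u : ℝ → ℝ} {M₁ M₂ : ℝ}

lemma abs_sub_le_of_abs_deriv_le (hu : Differentiable ℝ u) (h₁ : ∀ x, |deriv u x| ≤ M₁)
    (x y : ℝ) : |u y - u x| ≤ M₁ * |y - x| :=
  convex_univ.norm_image_sub_le_of_norm_deriv_le (fun z _ => hu z) (fun z _ => h₁ z)
    (mem_univ x) (mem_univ y)

lemma abs_taylor_two_le (hu : Differentiable ℝ u) (hu' : Differentiable ℝ (deriv u))
    (h₂ : ∀ x, |deriv (deriv u) x| ≤ M₂) (x δ : ℝ) :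
    |u x - u (x - δ) - deriv u x * δ| ≤ M₂ * δ ^ 2 := by
  have hM₂ : 0 ≤ M₂ := (abs_nonneg _).trans (h₂ x)
  have hderiv (z : ℝ) : HasDerivAt (fun y => u y - deriv u x * y) (deriv u z - deriv u x) z :=
    ((hu z).hasDerivAt.sub ((hasDerivAt_id z).const_mul _)).congr_deriv (by rw [mul_one])
  have hbound (z) (hz : z ∈ uIcc (x - δ) x) : ‖deriv u z - deriv u x‖ ≤ M₂ * |δ| := by
    refine (abs_sub_le_of_abs_deriv_le hu' h₂ x z).trans (mul_le_mul_of_nonneg_left ?_ hM₂)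
    simpa [abs_sub_comm] using abs_sub_right_of_mem_uIcc hz
  have h := (convex_uIcc (x - δ) x).norm_image_sub_le_of_norm_hasDerivWithin_le
    (fun z _ => (hderiv z).hasDerivWithinAt) hbound left_mem_uIcc right_mem_uIcc
  rw [norm_eq_abs, norm_eq_abs, sub_sub_cancel, mul_assoc, abs_mul_abs_self, ← sq] at h
  convert h using 2
  ring

lemma abs_exp_increment_sub_linear_le (hu : Differentiable ℝ u)
    (hu' : Differentiable ℝ (deriv u)) (h₁ : ∀ x, |deriv u x| ≤ M₁)
    (h₂ : ∀ x, |deriv (deriv u) x| ≤ M₂) {β T δ : ℝ} (hβ : 1 ≤ β) (hT : β * (M₁ * |δ|) ≤ T)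
    (x : ℝ) :
    |exp (β * (u x - u (x - δ))) - 1 - β * deriv u x * δ|
      ≤ (β * δ) ^ 2 * (M₁ ^ 2 * exp T + M₂) := by
  have hβ₀ : 0 ≤ β := zero_le_one.trans hβ
  have hincr : |β * (u x - u (x - δ))| ≤ β * (M₁ * |δ|) := by
    rw [abs_mul, abs_of_nonneg hβ₀]
    gcongr
    simpa using abs_sub_le_of_abs_deriv_le hu h₁ (x - δ) x
  have hexp : |exp (β * (u x - u (x - δ))) - 1 - β * (u x - u (x - δ))|
      ≤ (β * (M₁ * |δ|)) ^ 2 * exp T := by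
    refine (abs_exp_sub_one_sub_le _).trans ?_
    rw [← sq_abs (β * _)]
    gcongr
    exact hincr.trans hT
  have hlin : |β * (u x - u (x - δ) - deriv u x * δ)| ≤ β ^ 2 * (M₂ * δ ^ 2) := by
    rw [abs_mul, abs_of_nonneg hβ₀]
    gcongr
    · exact le_self_pow₀ hβ two_ne_zero
    · exact abs_taylor_two_le hu hu' h₂ x δ
  calc |exp (β * (u x - u (x - δ))) - 1 - β * deriv u x * δ|
      = |(exp (β * (u x - u (x - δ))) - 1 - β * (u x - u (x - δ)))
          + β * (u x - u (x - δ) - deriv u x * δ)| := by ring_nf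
    _ ≤ (β * (M₁ * |δ|)) ^ 2 * exp T + β ^ 2 * (M₂ * δ ^ 2) :=
        (abs_add_le _ _).trans (add_le_add hexp hlin)
    _ = (β * δ) ^ 2 * (M₁ ^ 2 * exp T + M₂) := by
        simp only [mul_pow, sq_abs]
        ring

lemma abs_integral_mul_exp_increment_sub_linear_le (hu : Differentiable ℝ u)
    (hu' : Differentiable ℝ (deriv u)) (h₁ : ∀ x, |deriv u x| ≤ M₁)
    (h₂ : ∀ x, |deriv (deriv u) x| ≤ M₂) {f δ : ℝ → ℝ} {a b B β ε T : ℝ} (hab : a ≤ b)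
    (hB : ∀ t, |f t| ≤ B) (hε : ∀ r ∈ Icc a b, |δ r| ≤ ε) (hβ : 1 ≤ β)
    (hT : β * (M₁ * ε) ≤ T) (x : ℝ) :
    |∫ r in a..b, f r * (exp (β * (u x - u (x - δ r))) - 1 - β * deriv u x * δ r)|
      ≤ B * ((β * ε) ^ 2 * (M₁ ^ 2 * exp T + M₂)) * (b - a) := by
  have hM₁ : 0 ≤ M₁ := (abs_nonneg _).trans (h₁ x)
  have hM₂ : 0 ≤ M₂ := (abs_nonneg _).trans (h₂ x)
  refine abs_intervalIntegral_le hab fun r hr => ?_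
  have hTr : β * (M₁ * |δ r|) ≤ T := by
    refine le_trans ?_ hT
    gcongr
    exact hε r hr
  have hsq : (β * δ r) ^ 2 ≤ (β * ε) ^ 2 := by
    rw [← sq_abs, abs_mul, abs_of_pos (zero_lt_one.trans_le hβ)]
    gcongr
    exact hε r hr
  rw [abs_mul]
  refine mul_le_mul (hB r) ((abs_exp_increment_sub_linear_le hu hu' h₁ h₂ hβ hTr x).trans ?_)
    (abs_nonneg _) ((abs_nonneg _).trans (hB r))
  gcongr

end Exponential

/-- The adjoint in `L²(exp (-β u) dx)` of the jump operator
`φ ↦ ∫ (φ (x + δ r) - φ x) G (x + r) dr / (2π)`, applied to the constant function `1`. -/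
def jumpAdjointOne (u G δ : ℝ → ℝ) (β x : ℝ) : ℝ :=
  (2 * π)⁻¹ * ∫ r in (-π)..π, (G (x + (r - δ r)) * exp (β * (u x - u (x - δ r))) - G (x + r))

/-- The adjoint in `L²(exp (-β u) dx)` of the generator
`φ ↦ ½ φ'' + α⁻¹ ∫ (φ (x + δ r) - φ x) G (x + r) dr / (2π)`, applied to the constant
function `1`. -/
def adjointOne (u G δ : ℝ → ℝ) (α β x : ℝ) : ℝ :=
  (β ^ 2 * deriv u x ^ 2 - β * deriv (deriv u) x) / 2 + α⁻¹ * jumpAdjointOne u G δ β x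

section AdjointOne

variable {u G δ : ℝ → ℝ} {α β : ℝ}

lemma continuous_jumpAdjointOne (hu : Continuous u) (hG : Continuous G) (hδ : Continuous δ) :
    Continuous (jumpAdjointOne u G δ β) := by
  refine continuous_const.mul
    (intervalIntegral.continuous_parametric_intervalIntegral_of_continuous' ?_ _ _)
  simp only [Function.uncurry_def]
  fun_prop

lemma continuous_adjointOne (hu : ContDiff ℝ 2 u) (hG : Continuous G) (hδ : Continuous δ) :
    Continuous (adjointOne u G δ α β) := by
  have hu₁ := (contDiff_one_deriv hu).continuous
  have := continuous_deriv_deriv hu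
  exact Continuous.add (f := fun x => (β ^ 2 * deriv u x ^ 2 - β * deriv (deriv u) x) / 2)
    (by fun_prop) (continuous_const.mul (continuous_jumpAdjointOne hu.continuous hG hδ))

section Duality

variable {φ : ℝ → ℝ}

lemma integral_mul_deriv_deriv_comm {e : ℝ → ℝ} {c : ℝ} (he : ContDiff ℝ 2 e)
    (hφ : ContDiff ℝ 2 φ) (heper : Function.Periodic e c) (hφper : Function.Periodic φ c) (a : ℝ) :
    ∫ x in a..a + c, e x * deriv (deriv φ) x = ∫ x in a..a + c, deriv (deriv e) x * φ x := by
  have hderiv {f : ℝ → ℝ} (hf : ContDiff ℝ 2 f) (x : ℝ) := hasDerivAt_deriv (hf.of_le one_le_two) x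
  have hderiv₂ {f : ℝ → ℝ} (hf : ContDiff ℝ 2 f) (x : ℝ) :=
    hasDerivAt_deriv (contDiff_one_deriv hf) x
  have hint {f : ℝ → ℝ} (hf : ContDiff ℝ 2 f) :
      IntervalIntegrable (deriv f) volume a (a + c) ∧
        IntervalIntegrable (deriv (deriv f)) volume a (a + c) :=
    ⟨(contDiff_one_deriv hf).continuous.intervalIntegrable _ _,
      (continuous_deriv_deriv hf).intervalIntegrable _ _⟩
  rw [intervalIntegral.integral_mul_deriv_eq_deriv_mul (fun x _ => hderiv he x)
      (fun x _ => hderiv₂ hφ x) (hint he).1 (hint hφ).2,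
    intervalIntegral.integral_mul_deriv_eq_deriv_mul (fun x _ => hderiv₂ he x)
      (fun x _ => hderiv hφ x) (hint he).2 (hint hφ).1,
    heper, hφper, periodic_deriv heper, periodic_deriv hφper]
  ring

lemma contDiff_exp_mul (hu : ContDiff ℝ 2 u) : ContDiff ℝ 2 fun x => exp (-β * u x) :=
  (contDiff_const.mul hu).exp

lemma deriv_deriv_exp_mul (hu : ContDiff ℝ 2 u) (x : ℝ) :
    deriv (deriv fun x => exp (-β * u x)) x =
      exp (-β * u x) * (β ^ 2 * deriv u x ^ 2 - β * deriv (deriv u) x) := by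
  have h₁ (x : ℝ) : HasDerivAt (fun x => exp (-β * u x)) (exp (-β * u x) * (-β * deriv u x)) x :=
    ((hasDerivAt_deriv (hu.of_le one_le_two) x).const_mul (-β)).exp
  rw [show deriv (fun x => exp (-β * u x)) = _ from funext fun x => (h₁ x).deriv]
  refine ((h₁ x).mul ((hasDerivAt_deriv (contDiff_one_deriv hu) x).const_mul (-β))).deriv.trans ?_
  ring

lemma integral_comp_sub_of_periodic {f : ℝ → ℝ} {c : ℝ} (hf : Function.Periodic f c) (a t : ℝ) :
    ∫ x in a..a + c, f (x - t) = ∫ x in a..a + c, f x := by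
  rw [intervalIntegral.integral_comp_sub_right, add_sub_right_comm]
  exact hf.intervalIntegral_add_eq _ _

lemma intervalIntegral_swap_of_continuous {F : ℝ → ℝ → ℝ} (hF : Continuous F.uncurry)
    (a b c d : ℝ) : ∫ x in a..b, ∫ y in c..d, F x y = ∫ y in c..d, ∫ x in a..b, F x y :=
  intervalIntegral_intervalIntegral_swap <|
    (hF.continuousOn.integrableOn_compact (isCompact_uIcc.prod isCompact_uIcc)).mono_set
      (prod_mono uIoc_subset_uIcc uIoc_subset_uIcc)

lemma integral_exp_mul_shift_sub_eq (hu : Continuous u) (hG : Continuous G) (hφ : Continuous φ)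
    (huper : Function.Periodic u (2 * π)) (hGper : Function.Periodic G (2 * π))
    (hφper : Function.Periodic φ (2 * π)) (r d : ℝ) :
    ∫ x in (-π)..π, exp (-β * u x) * ((φ (x + d) - φ x) * G (x + r)) =
      ∫ x in (-π)..π, exp (-β * u x) * φ x *
        (G (x + (r - d)) * exp (β * (u x - u (x - d))) - G (x + r)) := by
  let F (x : ℝ) : ℝ := exp (-β * u x) * (φ (x + d) * G (x + r))
  have hFper : Function.Periodic F (2 * π) := fun x => by
    simp only [F, add_right_comm x (2 * π), huper _, hGper _, hφper _]
  have hF_sub (x : ℝ) : F (x - d) =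
      exp (-β * u x) * φ x * (G (x + (r - d)) * exp (β * (u x - u (x - d)))) := by
    have hexp : exp (-β * u (x - d)) = exp (-β * u x) * exp (β * (u x - u (x - d))) := by
      rw [← exp_add]
      ring_nf
    simp only [F, sub_add_cancel, hexp, sub_add_eq_add_sub, add_sub_assoc]
    ring
  have hshift := integral_comp_sub_of_periodic hFper (-π) d
  simp only [show -π + 2 * π = π by ring, hF_sub, F] at hshift
  simp only [mul_sub (exp _ * φ _), sub_mul, mul_sub (exp _)]
  rw [intervalIntegral.integral_sub (Continuous.intervalIntegrable (by fun_prop) _ _)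
      (Continuous.intervalIntegrable (by fun_prop) _ _),
    intervalIntegral.integral_sub (Continuous.intervalIntegrable (by fun_prop) _ _)
      (Continuous.intervalIntegrable (by fun_prop) _ _), hshift]
  simp only [mul_assoc]

lemma integral_exp_mul_jump_eq (hu : Continuous u) (hG : Continuous G) (hδ : Continuous δ)
    (hφ : Continuous φ) (huper : Function.Periodic u (2 * π)) (hGper : Function.Periodic G (2 * π))
    (hφper : Function.Periodic φ (2 * π)) :
    ∫ x in (-π)..π, exp (-β * u x) * kernelAverage (fun r => φ (x + δ r) - φ x) G x =
      ∫ x in (-π)..π, exp (-β * u x) * (φ x * jumpAdjointOne u G δ β x) := by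
  have hswap :
      ∫ x in (-π)..π, ∫ r in (-π)..π, exp (-β * u x) * ((φ (x + δ r) - φ x) * G (x + r)) =
      ∫ x in (-π)..π, ∫ r in (-π)..π, exp (-β * u x) * φ x *
        (G (x + (r - δ r)) * exp (β * (u x - u (x - δ r))) - G (x + r)) := by
    refine (intervalIntegral_swap_of_continuous ?_ _ _ _ _).trans
      (Eq.trans ?_ (intervalIntegral_swap_of_continuous ?_ _ _ _ _).symm)
    · simp only [Function.uncurry_def]
      fun_prop
    · exact congrArg (intervalIntegral · (-π) π volume) <| funext fun r =>
        integral_exp_mul_shift_sub_eq hu hG hφ huper hGper hφper r (δ r)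
    · simp only [Function.uncurry_def]
      fun_prop
  simp only [intervalIntegral.integral_const_mul] at hswap
  simp only [kernelAverage, jumpAdjointOne, mul_left_comm _ (2 * π)⁻¹,
    intervalIntegral.integral_const_mul, hswap, mul_assoc]

lemma integral_exp_mul_diffusion_eq (hu : ContDiff ℝ 2 u) (hφ : ContDiff ℝ 2 φ)
    (huper : Function.Periodic u (2 * π)) (hφper : Function.Periodic φ (2 * π)) :
    ∫ x in (-π)..π, exp (-β * u x) * deriv (deriv φ) x =
      ∫ x in (-π)..π, exp (-β * u x) *
        (φ x * (β ^ 2 * deriv u x ^ 2 - β * deriv (deriv u) x)) := by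
  have h := integral_mul_deriv_deriv_comm (contDiff_exp_mul (β := β) hu) hφ
    (fun x => by simp only [huper x]) hφper (-π)
  simpa only [deriv_deriv_exp_mul hu, show -π + 2 * π = π by ring, mul_assoc,
    mul_comm (φ _)] using h

lemma integral_exp_mul_generator_eq (hu : ContDiff ℝ 2 u) (hG : Continuous G) (hδ : Continuous δ)
    (hφ : ContDiff ℝ 2 φ) (huper : Function.Periodic u (2 * π))
    (hGper : Function.Periodic G (2 * π)) (hφper : Function.Periodic φ (2 * π)) :
    ∫ x in (-π)..π, exp (-β * u x) * (1 / 2 * deriv (deriv φ) x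
        + α⁻¹ * kernelAverage (fun r => φ (x + δ r) - φ x) G x) =
      ∫ x in (-π)..π, exp (-β * u x) * (φ x * adjointOne u G δ α β x) := by
  have : Continuous fun x => exp (-β * u x) := (contDiff_exp_mul hu).continuous
  have hjump : Continuous fun x => kernelAverage (fun r => φ (x + δ r) - φ x) G x := by
    have hφc := hφ.continuous
    refine continuous_const.mul
      (intervalIntegral.continuous_parametric_intervalIntegral_of_continuous' ?_ _ _)
    simp only [Function.uncurry_def]
    fun_prop
  have hlin {D J : ℝ → ℝ} (hD : Continuous D) (hJ : Continuous J) :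
      ∫ x in (-π)..π, exp (-β * u x) * (1 / 2 * D x + α⁻¹ * J x) =
        1 / 2 * (∫ x in (-π)..π, exp (-β * u x) * D x)
          + α⁻¹ * ∫ x in (-π)..π, exp (-β * u x) * J x := by
    simp only [mul_add, mul_left_comm (exp _)]
    rw [intervalIntegral.integral_add (Continuous.intervalIntegrable (by fun_prop) _ _)
      (Continuous.intervalIntegrable (by fun_prop) _ _), intervalIntegral.integral_const_mul,
      intervalIntegral.integral_const_mul]
  have hdiffusion_adj :
      Continuous fun x => φ x * (β ^ 2 * deriv u x ^ 2 - β * deriv (deriv u) x) :=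
    hφ.continuous.mul ((continuous_const.mul ((contDiff_one_deriv hu).continuous.pow 2)).sub
      (continuous_const.mul (continuous_deriv_deriv hu)))
  have hjump_adj : Continuous fun x => φ x * jumpAdjointOne u G δ β x :=
    hφ.continuous.mul (continuous_jumpAdjointOne hu.continuous hG hδ)
  rw [hlin (continuous_deriv_deriv hφ) hjump, integral_exp_mul_diffusion_eq hu hφ huper hφper,
    integral_exp_mul_jump_eq hu.continuous hG hδ hφ.continuous huper hGper hφper,
    ← hlin hdiffusion_adj hjump_adj]
  congr 1 with x
  rw [adjointOne]
  ring

end Duality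

section Estimate

variable {W : ℝ → ℝ} {x : ℝ}

-- Both first-order contributions of the jumps, `β u' ∫ δ f` from the potential and
-- `∫ δ' f - [δ f]` from the displacement, cancel against the diffusion part, because the jumps
-- have mean displacement `-αβu'/2`.
lemma adjointOne_kernelAverage_eq (hW : ContDiff ℝ 2 W) (hWπ : W (-π) = W π) (hG : Continuous G)
    (hper : Function.Periodic G (2 * π)) (hα : α ≠ 0)
    (hδ : δ = fun r => α * β / 2 * deriv W r) {f : ℝ → ℝ} (hf : f = fun t => G (x + t))
    (hu : u = kernelAverage W G) :
    adjointOne u G δ α β x = (2 * π * α)⁻¹ *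
      ((∫ r in (-π)..π, f (r - δ r) * (exp (β * (u x - u (x - δ r))) - 1 - β * deriv u x * δ r))
        + β * deriv u x * (∫ r in (-π)..π, δ r * (f (r - δ r) - f r))
        + ((∫ r in (-π)..π, (f (r - δ r) - f r))
          - ((∫ r in (-π)..π, deriv δ r * f r) - (δ π * f π - δ (-π) * f (-π))))) := by
  have hfc : Continuous f := by subst hf; fun_prop
  have hδc : Continuous δ := hδ ▸ continuous_const.mul (contDiff_one_deriv hW).continuous
  have huc : Continuous u := hu ▸ continuous_kernelAverage hW.continuous hG
  have hjump : ∫ r in (-π)..π, (f (r - δ r) * exp (β * (u x - u (x - δ r))) - f r) =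
      (∫ r in (-π)..π, f (r - δ r) * (exp (β * (u x - u (x - δ r))) - 1 - β * deriv u x * δ r))
        + β * deriv u x * ((∫ r in (-π)..π, δ r * (f (r - δ r) - f r)) + ∫ r in (-π)..π, δ r * f r)
        + ∫ r in (-π)..π, (f (r - δ r) - f r) := by
    rw [← intervalIntegral.integral_add, ← intervalIntegral.integral_const_mul,
      ← intervalIntegral.integral_add, ← intervalIntegral.integral_add]
    · congr 1 with r
      ring
    all_goals exact Continuous.intervalIntegrable (by fun_prop) _ _
  have hderiv : α * β / 2 * deriv u x = -((2 * π)⁻¹ * ∫ r in (-π)..π, δ r * f r) := by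
    simp only [hu, deriv_kernelAverage (hW.of_le one_le_two) hWπ hG hper, Pi.neg_apply,
      kernelAverage, hδ, hf, mul_assoc (α * β / 2), intervalIntegral.integral_const_mul]
    ring
  have hderiv₂ : α * β / 2 * deriv (deriv u) x =
      (2 * π)⁻¹ * ((∫ r in (-π)..π, deriv δ r * f r) - (δ π * f π - δ (-π) * f (-π))) := by
    simp only [hu, deriv_deriv_kernelAverage hW hWπ hG hper, kernelAverage, hδ, hf,
      deriv_const_mul_field', mul_assoc (α * β / 2), intervalIntegral.integral_const_mul]
    ring
  have hG_eq (t : ℝ) : G (x + t) = f t := (congrFun hf t).symm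
  simp only [adjointOne, jumpAdjointOne, hG_eq]
  rw [hjump, mul_inv]
  linear_combination (-(β ^ 2 * deriv u x ^ 2 - β * deriv (deriv u) x) / 2) * inv_mul_cancel₀ hα
    + α⁻¹ * β * deriv u x * hderiv - α⁻¹ * hderiv₂

lemma abs_adjointOne_kernelAverage_le {A B M a ε T : ℝ} (hW : ContDiff ℝ 2 W)
    (hWπ : W (-π) = W π) (hM : ∀ r ∈ Icc (-π) π, |deriv W r| ≤ M)
    (hM' : ∀ r ∈ Icc (-π) π, |deriv (deriv W) r| ≤ M) (hG : Continuous G)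
    (hper : Function.Periodic G (2 * π)) (hB : ∀ x, |G x| ≤ B)
    (hA : 0 ≤ A) (ha : 0 ≤ a) (hH : ∀ x y, |G x - G y| ≤ A * |x - y| ^ a)
    (hα : 0 < α) (hβ : 1 ≤ β) (hδ : δ = fun r => α * β / 2 * deriv W r)
    (hε : ε = α * β / 2 * M) (hT : β * (M * B * ε) ≤ T) :
    |adjointOne (kernelAverage W G) G δ α β x| ≤ (2 * π * α)⁻¹ *
      (B * ((β * ε) ^ 2 * ((M * B) ^ 2 * exp T + 2 * (M * B))) * (2 * π)
        + β * (M * B) * (2 * (1 + 2 * π) * (ε * (B * ε)))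
        + (2 + 2 * π) * (A * ε ^ a * ε)) := by
  have hβ₀ : 0 < β := zero_lt_one.trans_le hβ
  have : 0 ≤ B := (abs_nonneg _).trans (hB 0)
  have hδ₁ : ContDiff ℝ 1 δ := hδ ▸ contDiff_const.mul (contDiff_one_deriv hW)
  have hδε (r) (hr : r ∈ Icc (-π) π) : |δ r| ≤ ε := by
    rw [hδ, hε, abs_mul, abs_of_pos (by positivity)]
    exact mul_le_mul_of_nonneg_left (hM r hr) (by positivity)
  have hδε' (r) (hr : r ∈ Icc (-π) π) : |deriv δ r| ≤ ε := by
    rw [hδ, hε, deriv_const_mul_field', abs_mul, abs_of_pos (by positivity)]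
    exact mul_le_mul_of_nonneg_left (hM' r hr) (by positivity)
  have : 0 ≤ ε := (abs_nonneg _).trans (hδε π ⟨neg_pi_le_pi, le_rfl⟩)
  have hu₁ := abs_deriv_kernelAverage_le hW hWπ hG hper hB hM
  have hu₂ := abs_deriv_deriv_kernelAverage_le hW hWπ hG hper hB hM hM'
  have hu := contDiff_two_kernelAverage hW hWπ hG hper
  set u := kernelAverage W G with hu_def
  set f : ℝ → ℝ := fun t => G (x + t) with hf
  have hfc : Continuous f := by fun_prop
  have hfH (t t') : |f t - f t'| ≤ A * |t - t'| ^ a := by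
    simpa only [hf, add_sub_add_left_eq_sub] using hH (x + t) (x + t')
  have hexp := abs_integral_mul_exp_increment_sub_linear_le (f := fun r => f (r - δ r))
    (hu.differentiable two_ne_zero) ((contDiff_one_deriv hu).differentiable one_ne_zero) hu₁ hu₂
    neg_pi_le_pi (fun r => hB _) hδε hβ hT x
  have hdrift := abs_integral_mul_displacement_sub_le hfc hδ₁ hδ₁ neg_pi_le_pi (fun t => hB _)
    hδε hδε' hδε hδε'
  have hmass := abs_integral_displacement_sub_sub_le hfc hδ₁ neg_pi_le_pi hfH hA ha hδε hδε'
  rw [adjointOne_kernelAverage_eq hW hWπ hG hper hα.ne' hδ hf hu_def, abs_mul,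
    abs_of_pos (by positivity)]
  rw [sub_neg_eq_add, ← two_mul] at hexp hdrift hmass
  gcongr
  refine (abs_add_three _ _ _).trans (add_le_add_three hexp ?_ hmass)
  rw [abs_mul, abs_mul, abs_of_pos hβ₀]
  have hMB : 0 ≤ M * B := (abs_nonneg _).trans (hu₁ x)
  gcongr
  exact hu₁ x

lemma rpow_mul_self_le_of_le_mul {a ε M : ℝ} (ha : 0 ≤ a) (ha₁ : a ≤ 1) (hα : 0 ≤ α) (hβ : 0 < β)
    (hM : 1 ≤ M) (hε₀ : 0 ≤ ε) (hε : ε ≤ α * β * M) :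
    ε ^ a * ε ≤ M ^ 2 * (α * (α ^ a * β ^ (1 + a))) := by
  have hM₀ : 0 ≤ M := zero_le_one.trans hM
  have hMa : M ^ a ≤ M := by simpa using rpow_le_rpow_of_exponent_le hM ha₁
  calc ε ^ a * ε ≤ (α * β * M) ^ a * (α * β * M) := by gcongr
    _ = α ^ a * β ^ a * M ^ a * (α * β * M) := by
        rw [mul_rpow (by positivity) hM₀, mul_rpow hα hβ.le]
    _ ≤ α ^ a * β ^ a * M * (α * β * M) := by gcongr
    _ = M ^ 2 * (α * (α ^ a * β ^ (1 + a))) := by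
        rw [rpow_add hβ, rpow_one]
        ring

lemma abs_adjointOne_kernelAverage_le_mul_max {A B M a κ : ℝ} (hW : ContDiff ℝ 2 W)
    (hWπ : W (-π) = W π) (hM_one : 1 ≤ M) (hM : ∀ r ∈ Icc (-π) π, |deriv W r| ≤ M)
    (hM' : ∀ r ∈ Icc (-π) π, |deriv (deriv W) r| ≤ M) (hG : Continuous G)
    (hper : Function.Periodic G (2 * π)) (hB : ∀ x, |G x| ≤ B)
    (ha : 0 ≤ a) (ha₁ : a ≤ 1) (hH : ∀ x y, |G x - G y| ≤ A * |x - y| ^ a)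
    (hα : 0 < α) (hβ : 1 ≤ β) (hκ : α * β ^ 2 ≤ κ) (x : ℝ) :
    |adjointOne (kernelAverage W G) G (fun r => α * β / 2 * deriv W r) α β x| ≤
      (2 * π)⁻¹ * (B * ((M * B) ^ 2 * exp (κ / 2 * (M ^ 2 * B)) + 2 * (M * B)) * (2 * π)
        + M * B ^ 2 * (2 * (1 + 2 * π)) + (2 + 2 * π) * A) * M ^ 2
        * max (α * β ^ 4) (α ^ a * β ^ (1 + a)) := by
  have hA : 0 ≤ A := by simpa using (abs_nonneg _).trans (hH 0 1)
  have hB₀ : 0 ≤ B := (abs_nonneg _).trans (hB 0)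
  have hβ₀ : 0 < β := zero_lt_one.trans_le hβ
  set m := max (α * β ^ 4) (α ^ a * β ^ (1 + a))
  set ε := α * β / 2 * M with hε
  have hT : β * (M * B * ε) ≤ κ / 2 * (M ^ 2 * B) := by
    calc β * (M * B * ε) = α * β ^ 2 / 2 * (M ^ 2 * B) := by rw [hε]; ring
      _ ≤ κ / 2 * (M ^ 2 * B) := by gcongr
  have hε_le : ε ≤ α * β * M :=
    mul_le_mul_of_nonneg_right (half_le_self (by positivity)) (by positivity)
  have hsq : (β * ε) ^ 2 ≤ M ^ 2 * (α * m) := by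
    calc (β * ε) ^ 2 ≤ (β * (α * β * M)) ^ 2 := by gcongr
      _ = M ^ 2 * (α * (α * β ^ 4)) := by ring
      _ ≤ M ^ 2 * (α * m) := by gcongr; exact le_max_left _ _
  have hmul_sq : β * ε ^ 2 ≤ M ^ 2 * (α * m) :=
    (mul_le_mul_of_nonneg_right (le_self_pow₀ hβ two_ne_zero) (sq_nonneg ε)).trans
      (mul_pow β ε 2 ▸ hsq)
  have hrpow : ε ^ a * ε ≤ M ^ 2 * (α * m) := by
    calc ε ^ a * ε ≤ M ^ 2 * (α * (α ^ a * β ^ (1 + a))) :=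
          rpow_mul_self_le_of_le_mul ha ha₁ hα.le hβ₀ hM_one (by positivity) hε_le
      _ ≤ M ^ 2 * (α * m) := by
          have hm : α ^ a * β ^ (1 + a) ≤ m := le_max_right _ _
          gcongr
  refine (abs_adjointOne_kernelAverage_le hW hWπ hM hM' hG hper hB hA ha hH hα hβ rfl hε
    hT).trans ?_
  calc _ = (2 * π * α)⁻¹ * (B * ((M * B) ^ 2 * exp (κ / 2 * (M ^ 2 * B)) + 2 * (M * B)) * (2 * π)
          * (β * ε) ^ 2 + M * B ^ 2 * (2 * (1 + 2 * π)) * (β * ε ^ 2)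
          + (2 + 2 * π) * A * (ε ^ a * ε)) := by ring
    _ ≤ (2 * π * α)⁻¹ * (B * ((M * B) ^ 2 * exp (κ / 2 * (M ^ 2 * B)) + 2 * (M * B)) * (2 * π)
          * (M ^ 2 * (α * m)) + M * B ^ 2 * (2 * (1 + 2 * π)) * (M ^ 2 * (α * m))
          + (2 + 2 * π) * A * (M ^ 2 * (α * m))) := by gcongr
    _ = _ := by field_simp

lemma exists_abs_adjointOne_kernelAverage_le (hW : ContDiff ℝ 2 W) (hWπ : W (-π) = W π)
    (A B κ : ℝ) :
    ∃ C, ∀ a : ℝ, 0 ≤ a → a ≤ 1 → ∀ G : ℝ → ℝ, Continuous G → Function.Periodic G (2 * π) →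
      (∀ x, |G x| ≤ B) → (∀ x y, |G x - G y| ≤ A * |x - y| ^ a) →
      ∀ α β, 0 < α → 1 ≤ β → α * β ^ 2 ≤ κ → ∀ x,
        |adjointOne (kernelAverage W G) G (fun r => α * β / 2 * deriv W r) α β x|
          ≤ C * max (α * β ^ 4) (α ^ a * β ^ (1 + a)) := by
  obtain ⟨M₁, hM₁⟩ := isCompact_Icc.exists_bound_of_continuousOn (s := Icc (-π) π)
    (contDiff_one_deriv hW).continuous.continuousOn
  obtain ⟨M₂, hM₂⟩ := isCompact_Icc.exists_bound_of_continuousOn (s := Icc (-π) π)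
    (continuous_deriv_deriv hW).continuousOn
  exact ⟨_, fun a ha ha₁ G hG hper hB hH α β hα hβ hκ x =>
    abs_adjointOne_kernelAverage_le_mul_max hW hWπ (le_max_left 1 (max M₁ M₂))
      (fun r hr => (hM₁ r hr).trans ((le_max_left _ _).trans (le_max_right _ _)))
      (fun r hr => (hM₂ r hr).trans ((le_max_right _ _).trans (le_max_right _ _)))
      hG hper hB ha ha₁ hH hα hβ hκ x⟩

end Estimate

end AdjointOne

section Circle

variable {g : 𝕋 → ℝ} {ν : Measure 𝕋} {p α β A a x : ℝ}

lemma rep_coe (hx : x ∈ Ioc (-π) π) : rep (x : 𝕋) = x := by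
  rw [rep, AddCircle.equivIoc_coe_of_mem]
  exact ⟨hx.1, by linarith [hx.2]⟩

lemma coe_rep (z : 𝕋) : (rep z : 𝕋) = z := AddCircle.coe_equivIoc

lemma measurable_rep : Measurable rep :=
  measurable_subtype_coe.comp (AddCircle.measurableEquivIoc (2 * π) (-π)).measurable

lemma dist_add_coe (z : 𝕋) (hx : x ∈ Ioc (-π) π) : dist z (z + (x : 𝕋)) = |x| := by
  rw [dist_self_add_right, (AddCircle.norm_coe_eq_abs_iff (2 * π) two_pi_pos.ne').2]
  rw [abs_of_pos two_pi_pos, abs_le]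
  constructor <;> linarith [hx.1, hx.2]

lemma dist_le_pi (y z : 𝕋) : dist y z ≤ π := by
  have h := AddCircle.norm_le_half_period (2 * π) two_pi_pos.ne' (x := y - z)
  rwa [abs_of_pos two_pi_pos, mul_div_cancel_left₀ _ two_ne_zero, ← dist_eq_norm] at h

lemma dist_coe_le (x y : ℝ) : dist (x : 𝕋) (y : 𝕋) ≤ |x - y| := by
  rw [dist_eq_norm, ← AddCircle.coe_sub]
  exact QuotientAddGroup.norm_mk_le_norm

lemma sgn_add_coe (z : 𝕋) (hx : x ∈ Ioc (-π) π) :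
    sgn z (z + (x : 𝕋)) = if 0 ≤ x then 1 else -1 := by
  rw [sgn, add_sub_cancel_left, rep_coe hx]

lemma periodic_comp_coe (g : 𝕋 → ℝ) : Function.Periodic (fun t : ℝ => g t) (2 * π) := fun t => by
  simp only [AddCircle.coe_add_period]

instance isProbabilityMeasure_lam : IsProbabilityMeasure lam := by
  refine ⟨?_⟩
  rw [lam, Measure.smul_apply, AddCircle.measure_univ, smul_eq_mul]
  exact ENNReal.inv_mul_cancel (by simp [pi_pos]) ENNReal.ofReal_ne_top

lemma integral_lam (F : 𝕋 → ℝ) (x : ℝ) :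
    ∫ y, F y ∂lam = (2 * π)⁻¹ * ∫ r in (-π)..π, F ((x + r : ℝ) : 𝕋) := by
  have hperiod := AddCircle.intervalIntegral_preimage (2 * π) (-π) fun y => F ((x : 𝕋) + y)
  rw [show -π + 2 * π = π by ring, integral_add_left_eq_self] at hperiod
  simp only [AddCircle.coe_add, hperiod]
  rw [lam, integral_smul_measure, ENNReal.toReal_inv, ENNReal.toReal_ofReal two_pi_pos.le,
    smul_eq_mul]

lemma integral_withDensity_ofReal {X : Type*} [MeasurableSpace X] {μ : Measure X} {f : X → ℝ}
    (hf : Measurable f) (hf₀ : ∀ x, 0 ≤ f x) (F : X → ℝ) :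
    ∫ y, F y ∂(μ.withDensity fun y => ENNReal.ofReal (f y)) = ∫ y, F y * f y ∂μ := by
  rw [integral_withDensity_eq_integral_toReal_smul (by fun_prop) (by simp)]
  simp only [ENNReal.toReal_ofReal (hf₀ _), smul_eq_mul, mul_comm]

lemma integral_withDensity_lam (hg : Measurable g) (hg₀ : ∀ z, 0 ≤ g z) (F : 𝕋 → ℝ) (x : ℝ) :
    ∫ y, F y ∂(lam.withDensity fun y => ENNReal.ofReal (g y)) =
      kernelAverage (fun r => F ((x : 𝕋) + (r : 𝕋))) (fun t => g t) x := by
  rw [integral_withDensity_ofReal hg hg₀, integral_lam _ x]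
  simp only [kernelAverage, AddCircle.coe_add]

lemma measurable_Up [SFinite ν] : Measurable (Up p ν) :=
  (Measurable.stronglyMeasurable (f := fun q : 𝕋 × 𝕋 => dist q.1 q.2 ^ p)
    (by fun_prop)).integral_prod_right.measurable

lemma Up_coe (hg : Measurable g) (hg₀ : ∀ z, 0 ≤ g z)
    (hν : ν = lam.withDensity fun y => ENNReal.ofReal (g y)) (x : ℝ) :
    Up p ν (x : 𝕋) = kernelAverage (fun r => |r| ^ p) (fun t => g t) x := by
  rw [Up, hν, integral_withDensity_lam hg hg₀ _ x]
  exact congrFun (kernelAverage_congr fun r hr => by rw [dist_add_coe _ hr]) x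

lemma genp_eq (hp : 1 < p) (hg : Measurable g) (hg₀ : ∀ z, 0 ≤ g z)
    (hν : ν = lam.withDensity fun y => ENNReal.ofReal (g y)) (φ : ℝ → ℝ) (z : 𝕋) :
    genp p ν α β φ z = 1 / 2 * deriv (deriv φ) (rep z) + α⁻¹ * kernelAverage
      (fun r => φ (rep z + α * β / 2 * deriv (fun r => |r| ^ p) r) - φ (rep z))
      (fun t => g t) (rep z) := by
  rw [genp, hν, integral_withDensity_lam hg hg₀ _ (rep z)]
  congr 2
  refine congrFun (kernelAverage_congr fun r hr => ?_) _
  rw [coe_rep, dist_add_coe _ hr, sgn_add_coe _ hr, ← mul_abs_rpow_sub_one_mul_sign hp]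
  ring_nf

lemma integral_gibbsp_comp_rep [SFinite ν] (f : ℝ → ℝ) :
    ∫ z, f (rep z) ∂gibbsp p ν β =
      (2 * π * Zp p ν β)⁻¹ * ∫ x in (-π)..π, exp (-β * Up p ν x) * f x := by
  have hZ : 0 ≤ Zp p ν β := integral_nonneg fun _ => (exp_pos _).le
  have hUp := measurable_Up (p := p) (ν := ν)
  rw [gibbsp, integral_withDensity_lam (by fun_prop) (fun z => div_nonneg (exp_pos _).le hZ) _ 0,
    kernelAverage_congr (w := fun r => f r) fun r hr => by
      rw [AddCircle.coe_zero, zero_add, rep_coe hr]]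
  rw [kernelAverage, mul_inv (2 * π), mul_assoc, ← intervalIntegral.integral_const_mul (Zp p ν β)⁻¹]
  simp only [zero_add, div_eq_inv_mul, mul_comm (f _), mul_assoc (Zp p ν β)⁻¹]

lemma continuous_of_dist_le_rpow (ha : 0 < a) (hH : ∀ y z, |g y - g z| ≤ A * dist y z ^ a) :
    Continuous g := by
  refine continuous_iff_continuousAt.2 fun z => tendsto_iff_dist_tendsto_zero.2 ?_
  have hlim : Tendsto (fun y => A * dist y z ^ a) (nhds z) (nhds 0) := by
    have hcont : Continuous fun y => A * dist y z ^ a :=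
      continuous_const.mul ((continuous_id.dist continuous_const).rpow_const fun _ => Or.inr ha.le)
    simpa [zero_rpow ha.ne'] using hcont.tendsto z
  exact squeeze_zero (fun _ => dist_nonneg) (fun y => hH y z) hlim

lemma dist_rpow_le_pi (ha : 0 ≤ a) (ha₁ : a ≤ 1) (y z : 𝕋) : dist y z ^ a ≤ π :=
  calc dist y z ^ a ≤ π ^ a := rpow_le_rpow dist_nonneg (dist_le_pi y z) ha
    _ ≤ π ^ (1 : ℝ) := rpow_le_rpow_of_exponent_le (by linarith [pi_gt_three]) ha₁
    _ = π := rpow_one π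

lemma nonneg_of_dist_le_rpow (hH : ∀ y z, |g y - g z| ≤ A * dist y z ^ a) : 0 ≤ A := by
  have hdist : dist (0 : 𝕋) (0 + (1 : ℝ)) = 1 := by
    rw [dist_add_coe 0 ⟨by linarith [pi_pos], by linarith [pi_gt_three]⟩, abs_one]
  simpa only [hdist, one_rpow, mul_one] using (abs_nonneg _).trans (hH 0 (0 + (1 : ℝ)))

lemma density_le [IsProbabilityMeasure ν] (ha : 0 ≤ a) (ha₁ : a ≤ 1)
    (hg : Continuous g) (hg₀ : ∀ z, 0 ≤ g z)
    (hν : ν = lam.withDensity fun y => ENNReal.ofReal (g y))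
    (hH : ∀ y z, |g y - g z| ≤ A * dist y z ^ a) (z : 𝕋) : g z ≤ 1 + A * π := by
  have hmass : ∫ y, g y ∂lam = 1 := by
    simpa [← hν] using (integral_withDensity_ofReal (μ := lam) hg.measurable hg₀ fun _ => 1).symm
  obtain ⟨y, hy⟩ := exists_le_integral
    (hg.integrable_of_hasCompactSupport (μ := lam) (HasCompactSupport.of_compactSpace g))
  have hyz := (le_abs_self _).trans ((hH z y).trans
    (mul_le_mul_of_nonneg_left (dist_rpow_le_pi ha ha₁ z y) (nonneg_of_dist_le_rpow hH)))
  linarith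

lemma integral_genp_eq [SFinite ν] (hp : 2 ≤ p) (hg : Continuous g) (hg₀ : ∀ z, 0 ≤ g z)
    (hν : ν = lam.withDensity fun y => ENNReal.ofReal (g y)) {φ : ℝ → ℝ}
    (hφper : Function.Periodic φ (2 * π)) (hφ : ContDiff ℝ 2 φ) :
    ∫ z, genp p ν α β φ z ∂gibbsp p ν β = ∫ z, φ (rep z) *
      adjointOne (kernelAverage (fun r => |r| ^ p) fun t => g t) (fun t => g t)
        (fun r => α * β / 2 * deriv (fun r => |r| ^ p) r) α β (rep z) ∂gibbsp p ν β := by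
  have hW := contDiff_two_abs_rpow hp
  have hG : Continuous fun t : ℝ => g t := hg.comp (AddCircle.continuous_mk' _)
  have hGper := periodic_comp_coe g
  have hu := contDiff_two_kernelAverage hW (by rw [abs_neg]) hG hGper
  have hδ : Continuous fun r => α * β / 2 * deriv (fun r : ℝ => |r| ^ p) r :=
    continuous_const.mul (contDiff_one_deriv hW).continuous
  simp only [genp_eq (by linarith) hg.measurable hg₀ hν]
  rw [integral_gibbsp_comp_rep (fun x => 1 / 2 * deriv (deriv φ) x + α⁻¹ * kernelAverage
      (fun r => φ (x + α * β / 2 * deriv (fun r => |r| ^ p) r) - φ x) (fun t => g t) x),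
    integral_gibbsp_comp_rep (fun x => φ x * adjointOne _ _ _ α β x)]
  simp only [Up_coe hg.measurable hg₀ hν]
  rw [integral_exp_mul_generator_eq hu hG hδ hφ (periodic_kernelAverage hGper) hGper hφper]

end Circle

theorem adjoint_one_estimate_p_gt_two_general (p : ℝ) (hp : 2 ≤ p) (A κ : ℝ) :
    ∃ C : ℝ, 0 < C ∧
      ∀ (a : ℝ), 0 < a → a ≤ 1 →
      ∀ (g : 𝕋 → ℝ) (ν : Measure 𝕋), IsProbabilityMeasure ν →
        ν = lam.withDensity (fun y => ENNReal.ofReal (g y)) →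
        (∀ x, 0 ≤ g x) →
        (∀ x y : 𝕋, |g x - g y| ≤ A * dist x y ^ a) →
      ∀ (β α : ℝ), 1 ≤ β → 0 < α → α * β ^ 2 ≤ κ →
      ∃ h : 𝕋 → ℝ, Measurable h ∧
        (∀ x, |h x| ≤ C * max (α * β ^ 4) (α ^ a * β ^ (1 + a))) ∧
        ∀ φ : ℝ → ℝ, Function.Periodic φ (2 * π) → ContDiff ℝ 2 φ →
          ∫ z, genp p ν α β φ z ∂(gibbsp p ν β) = ∫ z, φ (rep z) * h z ∂(gibbsp p ν β) := by
  have hW := contDiff_two_abs_rpow hp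
  have hWπ : |-π| ^ p = |π| ^ p := by rw [abs_neg]
  obtain ⟨C, hC⟩ := exists_abs_adjointOne_kernelAverage_le hW hWπ A (1 + A * π) κ
  refine ⟨max 1 C, by positivity, fun a ha ha₁ g ν _ hν hg₀ hH β α hβ hα hκ => ?_⟩
  have hg := continuous_of_dist_le_rpow ha hH
  have hG : Continuous fun t : ℝ => g t := hg.comp (AddCircle.continuous_mk' _)
  have hGper := periodic_comp_coe g
  refine ⟨_, (continuous_adjointOne (contDiff_two_kernelAverage hW hWπ hG hGper) hG
    (continuous_const.mul (contDiff_one_deriv hW).continuous)).measurable.comp measurable_rep,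
    fun z => ?_, fun φ hφper hφ => integral_genp_eq hp hg hg₀ hν hφper hφ⟩
  refine (hC a ha.le ha₁ _ hG hGper (fun t => ?_) (fun s t => ?_) α β hα hβ hκ _).trans
    (mul_le_mul_of_nonneg_right (le_max_right 1 C) (by positivity))
  · rw [abs_of_nonneg (hg₀ _)]
    exact density_le ha.le ha₁ hg hg₀ hν hH _
  · exact (hH _ _).trans (mul_le_mul_of_nonneg_left
      (rpow_le_rpow dist_nonneg (dist_coe_le s t) ha.le) (nonneg_of_dist_le_rpow hH))

/-- Proposition `mbl3`: for `p > 2`, with `σ := π^{2-p}/(p-1)`, and a Hölder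
density, there is a constant `C`, depending only on `p` and `A`, such that for `β ≥ 1` and
`0 < α < σ/(pβ²)` the adjoint of `L_{α,β}` in `L²(μ_β)` applied to `𝟙` (i.e. the function `h`
representing `φ ↦ ∫ L_{α,β}φ dμ_β`) satisfies `ess sup |h| ≤ C max(αβ⁴, α^a β^{1+a})`. -/
theorem adjoint_one_estimate_p_gt_two
    (p : ℝ) (hp : 2 < p) (A : ℝ) (hA : 0 < A) :
    ∃ C : ℝ, 0 < C ∧
      ∀ (a : ℝ), 0 < a → a ≤ 1 →
      ∀ (g : 𝕋 → ℝ) (ν : Measure 𝕋), IsProbabilityMeasure ν →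
        ν = lam.withDensity (fun y => ENNReal.ofReal (g y)) →
        (∀ x, 0 ≤ g x) →
        (∀ x y : 𝕋, |g x - g y| ≤ A * dist x y ^ a) →
      ∀ (β α : ℝ), 1 ≤ β → 0 < α → α < (π ^ (2 - p) / (p - 1)) / (p * β ^ 2) →
      ∃ h : 𝕋 → ℝ, Measurable h ∧
        (∀ᵐ x ∂lam, |h x| ≤ C * max (α * β ^ 4) (α ^ a * β ^ (1 + a))) ∧
        ∀ φ : ℝ → ℝ, Function.Periodic φ (2 * π) → ContDiff ℝ 2 φ →
          ∫ z, genp p ν α β φ z ∂(gibbsp p ν β) = ∫ z, φ (rep z) * h z ∂(gibbsp p ν β) := by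
  obtain ⟨C, hC₀, hC⟩ := adjoint_one_estimate_p_gt_two_general p hp.le A (π ^ (2 - p) / (p - 1) / p)
  refine ⟨C, hC₀, fun a ha ha₁ g ν hν_prob hν hg₀ hH β α hβ hα hα_lt => ?_⟩
  have hκ : α * β ^ 2 ≤ π ^ (2 - p) / (p - 1) / p := by
    rw [← div_div] at hα_lt
    exact ((lt_div_iff₀ (by positivity)).1 hα_lt).le
  obtain ⟨h, hmeas, hbound, hdual⟩ := hC a ha ha₁ g ν hν_prob hν hg₀ hH β α hβ hα hκ
  exact ⟨h, hmeas, Eventually.of_forall hbound, hdual⟩
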